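/- If x ∈ X_s (constant switch count under the corrected BFO rule), then x contains none of the blocks 0110100 (D_{5,6}^b), 1110100 (D_{9,10}^b), 111010100 (D_{9,10}^{rb}), 1110111 (D_{9,11}), or 1110110100 (D_{9,12}^b). -/

import Mathlib

/-- The parity (XOR of all cells) of a cyclic binary configuration. -/
def Par {n : ℕ} [NeZero n] (x : ZMod n → Bool) : ZMod 2 :=
  ∑ i : ZMod n, if x i then 1 else 0

/-- The global CA rule induced by a local rule of radius `r`
on cyclic configurations of length `n`. -/
def globalRule (r : ℕ) (f : (Fin (2*r+1) → Bool) → Bool) {n : ℕ}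
    (x : ZMod n → Bool) : ZMod n → Bool :=
  fun i => f (fun j => x (i + ((j : ℕ) : ZMod n) - (r : ZMod n)))

/-- The active (center-flipping) neighbourhoods of the corrected BFO rule
(transitions T1–T12; the center is cell 4 of 9). -/
def bfoActive (w : Fin 9 → Bool) : Bool :=
  (w 1 && w 2 && w 3 && !w 4 && !w 5) ||               -- T1
  (w 0 && w 1 && w 2 && !w 3 && !w 4) ||               -- T2
  (!w 1 && !w 2 && w 3 && !w 4 && !w 5) ||             -- T3
  (!w 0 && !w 1 && w 2 && !w 3 && !w 4) ||             -- T4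
  (!w 3 && w 4 && w 5 && !w 6) ||                      -- T5
  (!w 2 && w 3 && w 4 && !w 5) ||                      -- T6
  (!w 1 && !w 2 && w 3 && !w 4 && w 5 && !w 6) ||      -- T7
  (!w 2 && !w 3 && w 4 && !w 5 && w 6 && !w 7) ||      -- T8
  (w 3 && w 4 && w 5 && !w 6 && w 7) ||                -- T9
  (w 0 && w 1 && w 2 && !w 3 && w 4 && !w 5) ||        -- T10
  (w 0 && w 1 && w 2 && !w 3 && w 4 && w 5 && w 6) ||  -- T11
  (w 2 && w 3 && w 4 && !w 5 && w 6 && w 7 && !w 8)    -- T12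

/-- The corrected BFO local rule (radius 4). -/
def bfoLocal (w : Fin 9 → Bool) : Bool := xor (bfoActive w) (w 4)

/-- The global rule induced by the corrected BFO rule. -/
def bfoGlobal {n : ℕ} (x : ZMod n → Bool) : ZMod n → Bool :=
  globalRule 4 bfoLocal x

/-- `x i x (i+1)` is a box: the pattern 01 preceded by 1 and followed by 00. -/
def IsBox {n : ℕ} (x : ZMod n → Bool) (i : ZMod n) : Prop :=
  x (i-1) = true ∧ x i = false ∧ x (i+1) = true ∧ x (i+2) = false ∧ x (i+3) = false

/-- Cell `j` belongs to some box of `x`. -/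
def InBox {n : ℕ} (x : ZMod n → Bool) (j : ZMod n) : Prop :=
  ∃ i, IsBox x i ∧ (j = i ∨ j = i + 1)

/-- `x` has a switch at position `i`: either a b-switch (a box at `i+1`)
or an r-switch (`x i ≠ x (i+1)` with neither cell in a box). -/
def IsSwitch {n : ℕ} (x : ZMod n → Bool) (i : ZMod n) : Prop :=
  IsBox x (i+1) ∨ (x i ≠ x (i+1) ∧ ¬ InBox x i ∧ ¬ InBox x (i+1))

/-- The number of switches of the configuration `x`. -/
noncomputable def switchCount {n : ℕ} (x : ZMod n → Bool) : ℕ :=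
  Nat.card {i : ZMod n // IsSwitch x i}

/-- The block of length `2k+2` starting at position `i` is an ordered block. -/
def IsOrderedBlock {n : ℕ} (x : ZMod n → Bool) (i : ZMod n) (k : ℕ) : Prop :=
  (∀ j ≤ k, ¬ (x (i + 2*j) = true ∧ x (i + 2*j + 1) = false)) ∧
  (x i = false ∧ x (i+1) = true) ∧
  ¬ (x (i + 2*k) = false ∧ x (i + 2*k + 1) = true) ∧
  (x (i + 2*k) = true ∧ x (i + 2*k + 1) = true → x (i + 2*k + 2) = false)

/-- An ordered block which is not a proper sub-block of another ordered block. -/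
def IsMaximalOrderedBlock {n : ℕ} (x : ZMod n → Bool) (i : ZMod n) (k : ℕ) : Prop :=
  IsOrderedBlock x i k ∧
  ∀ (i' : ZMod n) (k' d : ℕ), IsOrderedBlock x i' k' →
    i = i' + 2*d → 2*d + 2*k + 2 ≤ 2*k' + 2 → d = 0 ∧ k = k'

/-- `x` contains the word `w` starting at position `i`. -/
def ContainsAt {n : ℕ} (x : ZMod n → Bool) (i : ZMod n) (w : List Bool) : Prop :=
  ∀ j : Fin w.length, x (i + ((j : ℕ) : ZMod n)) = w.get j

/-- `x` belongs to `X_s`: the switch count is constant during the whole evolution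
under the corrected BFO rule. -/
def InXs {n : ℕ} (x : ZMod n → Bool) : Prop :=
  ∀ t : ℕ, switchCount (bfoGlobal^[t] x) = switchCount x

/-- Membership of the neighbourhood of cell `i` in one of the AT pairs
`T_{1,2}`, `T_{3,4}` (center at `i`). -/
def MatchT1234 {n : ℕ} (y : ZMod n → Bool) (i : ZMod n) : Prop :=
  (y (i-3) = true ∧ y (i-2) = true ∧ y (i-1) = true ∧ y i = false ∧ y (i+1) = false) ∨
  (y (i-4) = true ∧ y (i-3) = true ∧ y (i-2) = true ∧ y (i-1) = false ∧ y i = false) ∨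
  (y (i-3) = false ∧ y (i-2) = false ∧ y (i-1) = true ∧ y i = false ∧ y (i+1) = false) ∨
  (y (i-4) = false ∧ y (i-3) = false ∧ y (i-2) = true ∧ y (i-1) = false ∧ y i = false)

/-- The `k`-fold concatenation of a configuration of length `n`. -/
def concatK {n : ℕ} (k : ℕ) (x : ZMod n → Bool) : ZMod (k*n) → Bool :=
  fun i => x ((i.val : ZMod n))

/-!
Each wall of the image of a configuration can be traced back, injectively, to a wall at distance at
most three. There are as many fronts as walls, so if the switch count is constant then no wall ever
disappears. This excludes many words, as a finite search shows, and without them walls and fronts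
move by a few cells, never pass each other, and fronts keep their parity.

No wall stays in place forever: it would end up blocking the front on its left for good, the wall
on the left of that front would be static as well and block another front, and the two blocked
fronts would form the word `010101`. In an odd period this word cannot occur.

Consecutive fronts at odd distance enclose one wall. It can move only when it is at even distance
from the front on its right, and the move makes this distance odd, so it moves at most once and is
static from then on, which is impossible. Hence all fronts are at even distance from each other.
As the translate of a front by the odd period is again a front, there are no fronts at all, and the
configuration is constant.
-/

namespace BFO

section Ring

variable {R : Type*} [Ring R]

/-- One step of the corrected BFO rule on configurations indexed by a ring, so that the cyclic
configurations (`R = ZMod n`) and their periodic unfoldings (`R = ℤ`) share one rule. -/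
def step (u : R → Bool) (p : R) : Bool :=
  bfoLocal fun j => u (p + ((j : ℕ) : R) - ((4 : ℕ) : R))

/-- A wall is a factor `01` outside the boxes, named after its second cell `w`. -/
def IsWall (u : R → Bool) (w : R) : Prop :=
  u (w - 1) = false ∧ u w = true ∧ ¬(u (w - 2) = true ∧ u (w + 1) = false ∧ u (w + 2) = false)

/-- A front is a factor `10` not overlapping a preceding box, named after its second cell `e`. -/
def IsFront (u : R → Bool) (e : R) : Prop :=
  u (e - 1) = true ∧ u e = false ∧ ¬(u (e - 3) = true ∧ u (e - 2) = false ∧ u (e + 1) = false)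

/-- The box pattern `10100` of `IsBox`, named after its second cell. -/
def StartsBox (u : R → Bool) (e : R) : Prop :=
  u (e - 1) = true ∧ u e = false ∧ u (e + 1) = true ∧ u (e + 2) = false ∧ u (e + 3) = false

/-- The front at `e` is blocked: it is the middle of a factor `0101` not followed by `00`, so that
a wall at `e + 1` bars its way. -/
def IsBlocked (u : R → Bool) (e : R) : Prop :=
  u (e - 2) = false ∧ u (e - 1) = true ∧ u e = false ∧ u (e + 1) = true ∧
    ¬(u (e + 2) = false ∧ u (e + 3) = false)

/-- With `y` the image of `u`, the wall `w` of `u` has a descendant among the cells `w, …, w + 3`,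
reached without passing another wall of `u`. -/
def Survives (u y : R → Bool) (w : R) : Prop :=
  IsWall y w ∨ IsWall y (w + 1) ∨ (IsWall y (w + 2) ∧ ¬IsWall u (w + 2)) ∨
    (IsWall y (w + 3) ∧ ¬IsWall u (w + 2) ∧ ¬IsWall u (w + 3))

instance (u : R → Bool) (w : R) : Decidable (IsWall u w) := by unfold IsWall; infer_instance

instance (u : R → Bool) (e : R) : Decidable (IsFront u e) := by unfold IsFront; infer_instance

instance (u : R → Bool) (e : R) : Decidable (StartsBox u e) := by unfold StartsBox; infer_instance

instance (u : R → Bool) (e : R) : Decidable (IsBlocked u e) := by unfold IsBlocked; infer_instance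

instance (u y : R → Bool) (w : R) : Decidable (Survives u y w) := by
  unfold Survives; infer_instance

/-- The configuration on `ℤ` seen from the cell `p`. -/
def view (u : R → Bool) (p : R) (k : ℤ) : Bool := u (p + k)

@[simp] theorem view_apply (u : R → Bool) (p : R) (k : ℤ) : view u p k = u (p + k) := rfl

@[simp] theorem isWall_view (u : R → Bool) (p : R) (k : ℤ) :
    IsWall (view u p) k ↔ IsWall u (p + k) := by
  simp [IsWall, add_sub_assoc, add_assoc]

@[simp] theorem isFront_view (u : R → Bool) (p : R) (k : ℤ) :
    IsFront (view u p) k ↔ IsFront u (p + k) := by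
  simp [IsFront, add_sub_assoc, add_assoc]

@[simp] theorem startsBox_view (u : R → Bool) (p : R) (k : ℤ) :
    StartsBox (view u p) k ↔ StartsBox u (p + k) := by
  simp [StartsBox, add_sub_assoc, add_assoc]

@[simp] theorem isBlocked_view (u : R → Bool) (p : R) (k : ℤ) :
    IsBlocked (view u p) k ↔ IsBlocked u (p + k) := by
  simp [IsBlocked, add_sub_assoc, add_assoc]

@[simp] theorem survives_view (u y : R → Bool) (p : R) (k : ℤ) :
    Survives (view u p) (view y p) k ↔ Survives u y (p + k) := by
  simp [Survives, add_assoc]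

@[simp] theorem step_view (u : R → Bool) (p : R) : step (view u p) = view (step u) p := by
  funext k
  simp [step, add_sub_assoc, add_assoc]

theorem step_iterate_view (u : R → Bool) (p : R) (t : ℕ) :
    step^[t] (view u p) = view (step^[t] u) p := by
  induction t with
  | zero => rfl
  | succ t ih => simp only [Function.iterate_succ_apply', ih, step_view]

end Ring

/-! ### Exhaustive search over words -/

/-- The word read on the `L` cells starting at `p`. -/
def window (u : ℤ → Bool) (p : ℤ) : ℕ → List Bool
  | 0 => []
  | L + 1 => u p :: window u (p + 1) L

/-- The configuration whose cells `-a, 1 - a, …` spell `l`, and which vanishes to the right of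
them. Cells to the left of `-a` are junk. -/
def ofWord (a : ℤ) (l : List Bool) (p : ℤ) : Bool := l.getD (p + a).toNat false

/-- The word obtained by one step of the rule, four cells being lost on each side. -/
def image : List Bool → List Bool
  | [] => []
  | a :: l => match l with
    | b :: c :: d :: e :: f :: g :: h :: i :: _ =>
      bfoLocal ![a, b, c, d, e, f, g, h, i] :: image l
    | _ => []

theorem image_eq_nil {l : List Bool} (h : l.length < 9) : image l = [] := by
  unfold image
  split
  · rfl
  split
  · simp at h
    omega
  · rfl

theorem image_window (u : ℤ → Bool) (L : ℕ) (p : ℤ) :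
    image (window u p (L + 8)) = window (step u) (p + 4) L := by
  induction L generalizing p with
  | zero => rfl
  | succ L ih =>
    have hcell : bfoLocal ![u p, u (p + 1), u (p + 1 + 1), u (p + 1 + 1 + 1),
        u (p + 1 + 1 + 1 + 1), u (p + 1 + 1 + 1 + 1 + 1), u (p + 1 + 1 + 1 + 1 + 1 + 1),
        u (p + 1 + 1 + 1 + 1 + 1 + 1 + 1), u (p + 1 + 1 + 1 + 1 + 1 + 1 + 1 + 1)] =
        step u (p + 4) := by
      unfold step
      congr 1
      funext j
      fin_cases j <;> simp [add_assoc, add_sub_assoc]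
    have htail := ih (p + 1)
    rw [add_right_comm] at htail
    simp only [window, image] at htail ⊢
    rw [htail, hcell]

/-- Some word of `fs` is a prefix of `l`; all words of `fs` are matched simultaneously. -/
def excluded : List (List Bool) → List Bool → Bool
  | fs, [] => fs.any List.isEmpty
  | fs, c :: l =>
    !fs.isEmpty && (fs.any List.isEmpty || excluded (fs.filterMap ([c].isPrefixOf? ·)) l)

theorem exists_prefix_of_excluded {fs : List (List Bool)} {l : List Bool}
    (h : excluded fs l = true) : ∃ f ∈ fs, f <+: l := by
  have of_any_isEmpty {fs : List (List Bool)} {l : List Bool}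
      (h : fs.any List.isEmpty = true) : ∃ f ∈ fs, f <+: l := by
    obtain ⟨f, hf, hempty⟩ := List.any_eq_true.1 h
    exact ⟨f, hf, by simp [List.isEmpty_iff.1 hempty]⟩
  induction l generalizing fs with
  | nil => exact of_any_isEmpty h
  | cons c l ih =>
    simp only [excluded, Bool.and_eq_true, Bool.or_eq_true] at h
    rcases h.2 with h | h
    · exact of_any_isEmpty h
    obtain ⟨g, hg, hgl⟩ := ih h
    obtain ⟨f, hf, hfg⟩ := List.mem_filterMap.1 hg
    match f, hfg with
    | [], hfg => simp [List.isPrefixOf?] at hfg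
    | b :: f, hfg =>
      obtain ⟨rfl, rfl⟩ : c = b ∧ f = g := by simpa [List.isPrefixOf?] using hfg
      exact ⟨_, hf, List.prefix_cons_inj c |>.2 hgl⟩

/-- None of the words of `fs` occurs in `u`. -/
def Avoids (fs : List (List Bool)) (u : ℤ → Bool) : Prop :=
  ∀ f ∈ fs, ∀ p, window u p f.length ≠ f

theorem length_window (u : ℤ → Bool) (p : ℤ) (L : ℕ) : (window u p L).length = L := by
  induction L generalizing p with
  | zero => rfl
  | succ L ih => simp [window, ih]

theorem take_window (u : ℤ → Bool) (p : ℤ) {k L : ℕ} (h : k ≤ L) :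
    (window u p L).take k = window u p k := by
  induction L generalizing p k with
  | zero => obtain rfl := Nat.le_zero.1 h; rfl
  | succ L ih =>
    cases k with
    | zero => rfl
    | succ k => simp [window, ih (p + 1) (Nat.le_of_succ_le_succ h)]

theorem Avoids.not_excluded {fs : List (List Bool)} {u : ℤ → Bool} (hu : Avoids fs u)
    (p : ℤ) (L : ℕ) : excluded fs (window u p L) = false := by
  refine Bool.eq_false_iff.2 fun h => ?_
  obtain ⟨f, hf, hpre⟩ := exists_prefix_of_excluded h
  have hlen := hpre.length_le
  rw [length_window] at hlen
  exact hu f hf p ((take_window u p hlen).symm.trans (List.prefix_iff_eq_take.1 hpre).symm)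

/-- `K` holds of every configuration `u` and its image `y` such that `u` avoids `fs` and the values
of `u` and `y` are as prescribed by `old` and `new`. The words on the cells `-a, …, L - 1 - a` are
enumerated from right to left, `l` being the part already chosen. -/
def certify (fs : List (List Bool)) (old new : List (ℤ × Bool)) (a : ℕ)
    (K : (ℤ → Bool) → (ℤ → Bool) → Prop) [DecidableRel K] : ℕ → List Bool → Bool
  | 0, l => decide (K (ofWord a l) (ofWord (a - 4) (image l)))
  | L + 1, l => [false, true].all fun c =>
      old.lookup ((L : ℤ) - a) == some (!c) || excluded fs (c :: l) ||
        (new.lookup ((L : ℤ) - a + 4)).any (fun b => (image (c :: l)).head? == some (!b)) ||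
        certify fs old new a K L (c :: l)

theorem eq_of_lookup_eq_some {cells : List (ℤ × Bool)} {u : ℤ → Bool}
    (h : ∀ c ∈ cells, u c.1 = c.2) {p : ℤ} {b : Bool} (hp : cells.lookup p = some b) :
    u p = b := by
  obtain ⟨l, l', rfl, -⟩ := List.lookup_eq_some_iff.1 hp
  exact h (p, b) (by simp)

theorem step_eq_of_head?_image {u : ℤ → Bool} {p : ℤ} {L : ℕ} {b : Bool}
    (h : (image (window u p L)).head? = some b) : step u (p + 4) = b := by
  rcases lt_or_ge L 9 with hL | hL
  · simp [image_eq_nil (l := window u p L) (by rwa [length_window])] at h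
  · obtain ⟨M, rfl⟩ := Nat.exists_eq_add_of_le' hL
    rw [show M + 9 = M + 1 + 8 from rfl, image_window] at h
    simpa [window] using h

section Search

variable {fs : List (List Bool)} {old new : List (ℤ × Bool)} {a : ℕ} {u : ℤ → Bool}
  (K : (ℤ → Bool) → (ℤ → Bool) → Prop) [DecidableRel K]

theorem Avoids.of_certify (hu : Avoids fs u) (hold : ∀ c ∈ old, u c.1 = c.2)
    (hnew : ∀ c ∈ new, step u c.1 = c.2) (L M : ℕ)
    (h : certify fs old new a K L (window u (L - a) M) = true) :
    K (ofWord a (window u (-a) (L + M))) (ofWord (a - 4) (image (window u (-a) (L + M)))) := by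
  induction L generalizing M with
  | zero => simpa [certify] using h
  | succ L ih =>
    have hcell := List.all_eq_true.1 h (u ((L : ℤ) - a)) (by cases u ((L : ℤ) - a) <;> simp)
    have hcons : u ((L : ℤ) - a) :: window u ((L + 1 : ℕ) - a) M =
        window u ((L : ℤ) - a) (M + 1) := by
      rw [window]; push_cast; ring_nf
    have hcellOld : old.lookup ((L : ℤ) - a) ≠ some (!u (L - a)) := fun hb =>
      Bool.self_ne_not _ (eq_of_lookup_eq_some hold hb)
    have hcellNew : ((new.lookup ((L : ℤ) - a + 4)).any fun b =>
        (image (window u ((L : ℤ) - a) (M + 1))).head? == some (!b)) = false := by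
      refine Bool.eq_false_iff.2 fun h => ?_
      obtain ⟨b, hb, himage⟩ := (Option.any_eq_true _ _).1 h
      exact Bool.not_ne_self b
        ((step_eq_of_head?_image (eq_of_beq himage)).symm.trans (eq_of_lookup_eq_some hnew hb))
    rw [hcons, hu.not_excluded, hcellNew, beq_false_of_ne hcellOld] at hcell
    simpa only [Nat.succ_add_eq_add_succ] using ih (M + 1) hcell

/-- The hypothesis `hK` says that `K` only looks at the cells inside the windows. -/
theorem Avoids.local_property (hu : Avoids fs u) (hold : ∀ c ∈ old, u c.1 = c.2)
    (hnew : ∀ c ∈ new, step u c.1 = c.2) (L : ℕ)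
    (hK : ∀ v y, K (ofWord a (window v (-a) (L + 8))) (ofWord (a - 4) (window y (-a + 4) L)) →
      K v y)
    (h : certify fs old new a K (L + 8) [] = true) : K u (step u) := by
  have := hu.of_certify K hold hnew (L + 8) 0 h
  rw [add_zero, image_window] at this
  exact hK _ _ this

end Search

/-! ### Words excluded by the survival of walls -/

/-- The words excluded, from the bottom of the list up, by the survival of walls: an entry `(k, f)`
records that, once the words below it are excluded, the wall at the letter number `k` of `f` does
not survive. The list was found by a computer search. -/
def doomedWords : List (ℕ × List Bool) := [
  (6, [true, true, true, false, false, false, true, true, true, false, true, true, false]),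
  (6, [false, false, true, false, false, false, true, true, true, false, true, true, false]),
  (6, [false, false, true, false, false, false, true, false, true, true, false]),
  (5, [true, true, false, false, false, true, false, true, true, false]),
  (5, [false, false, true, false, false, true, false, true, true]),
  (2, [true, false, true, true, true, false, true, true, false]),
  (5, [false, false, true, false, false, true, true, true]),
  (4, [true, true, false, false, true, false, true, true]),
  (3, [true, true, false, true, false, true, false, true]),
  (5, [false, false, true, false, false, true, false, false]),
  (4, [true, true, false, false, true, true, true]),
  (3, [true, true, false, true, false, true, true]),
  (1, [false, true, true, false, true, false, true]),
  (4, [false, false, true, false, true, false, true]),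
  (4, [true, true, false, false, true, false, false]),
  (1, [false, true, true, false, true, true]),
  (1, [false, true, true, false, false])]

/-- The words of `doomedWords` without their marks. -/
def excludedWords : List (List Bool) := doomedWords.map Prod.snd

/-- Every entry of the list is doomed in the sense of `doomedWords`. -/
def allDoomed : List (ℕ × List Bool) → Bool
  | [] => true
  | (k, f) :: W => allDoomed W &&
      certify (W.map Prod.snd) (f.zipIdx.map fun c => ((c.2 : ℤ) - k, c.1)) [] 6
        (fun v y => IsWall v 0 ∧ ¬Survives v y 0) 16 []

theorem getElem?_window (u : ℤ → Bool) (p : ℤ) {i L : ℕ} (h : i < L) :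
    (window u p L)[i]? = some (u (p + i)) := by
  induction L generalizing p i with
  | zero => omega
  | succ L ih =>
    cases i with
    | zero => simp [window]
    | succ i => simp [window, ih (p + 1) (Nat.lt_of_succ_lt_succ h), add_assoc, add_comm (1 : ℤ)]

theorem window_view (u : ℤ → Bool) (p k : ℤ) (L : ℕ) :
    window (view u p) k L = window u (p + k) L := by
  induction L generalizing k with
  | zero => rfl
  | succ L ih => simp [window, ih, add_assoc]

theorem Avoids.view {fs : List (List Bool)} {u : ℤ → Bool} (hu : Avoids fs u) (p : ℤ) :
    Avoids fs (view u p) := fun f hf k => by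
  rw [window_view]
  exact hu f hf (p + k)

theorem avoids_of_allDoomed {u : ℤ → Bool} (hu : ∀ w, IsWall u w → Survives u (step u) w)
    {W : List (ℕ × List Bool)} (hW : allDoomed W = true) : Avoids (W.map Prod.snd) u := by
  induction W with
  | nil => simp [Avoids]
  | cons c W ih =>
    obtain ⟨k, f⟩ := c
    obtain ⟨hW, hf⟩ := (Bool.and_eq_true _ _).mp hW
    rw [Avoids, List.map_cons, List.forall_mem_cons]
    refine ⟨fun p hp => ?_, ih hW⟩
    have hcells : ∀ c ∈ f.zipIdx.map fun c => ((c.2 : ℤ) - k, c.1),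
        view u (p + k) c.1 = c.2 := by
      simp only [List.mem_map, Prod.exists, List.mem_zipIdx_iff_getElem?]
      rintro _ ⟨b, i, hi, rfl⟩
      have hcell := getElem?_window u p (List.getElem?_eq_some_iff.1 hi).1
      rw [hp, hi, Option.some_inj] at hcell
      simp [hcell]
    obtain ⟨hwall, hdies⟩ := ((ih hW).view (p + k)).local_property
      (fun v y => IsWall v 0 ∧ ¬Survives v y 0) hcells (by simp) 8 (fun _ _ => id) hf
    rw [step_view, survives_view] at hdies
    exact hdies (hu _ ((isWall_view u (p + k) 0).1 hwall))

theorem avoids_excludedWords {u : ℤ → Bool} (hu : ∀ w, IsWall u w → Survives u (step u) w) :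
    Avoids excludedWords u :=
  avoids_of_allDoomed (W := doomedWords) hu (by decide +kernel)

/-- The second word is excluded two steps ahead: its image contains `01100`. -/
theorem window_ne_001010 {u : ℤ → Bool} (hu : Avoids excludedWords u)
    (hstep : Avoids excludedWords (step u)) (p : ℤ) :
    window u p 6 ≠ [false, false, true, false, true, false] := fun hp => by
  simp only [window, List.cons.injEq, add_assoc, Int.reduceAdd] at hp
  have himage := (hu.view p).local_property (a := 2)
    (fun _ y => window y 2 5 = [false, true, true, false, false])
    (old := [(0, false), (1, false), (2, true), (3, false), (4, true), (5, false)])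
    (by simp [hp]) (new := []) (by simp) 5 (fun _ _ => id) (by decide +kernel)
  rw [step_view, window_view] at himage
  exact hstep [false, true, true, false, false] (by simp [excludedWords, doomedWords]) _ himage

theorem window_ne_010101 {u : ℤ → Bool} (hu : Avoids excludedWords u) {n : ℕ} (hn : Odd n)
    (hper : ∀ p, u (p + n) = u p) (p : ℤ) :
    window u p 6 ≠ [false, true, false, true, false, true] := fun hp => by
  have hleft (p : ℤ) (hp : window u p 6 = [false, true, false, true, false, true]) :
      window u (p - 2) 6 = [false, true, false, true, false, true] := by
    have h₁ := hu [false, false, true, false, true, false, true]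
      (by simp [excludedWords, doomedWords]) (p - 1)
    have h₂ := hu [true, true, false, true, false, true, false, true]
      (by simp [excludedWords, doomedWords]) (p - 2)
    simp only [List.length_cons, List.length_nil, window, sub_add_cancel,
      show p - 2 + 1 = p - 1 by ring, List.cons.injEq, and_true] at hp h₁ h₂ ⊢
    simp_all
  have hall (j : ℕ) : window u (p - 2 * j) 6 = [false, true, false, true, false, true] := by
    induction j with
    | zero => simpa using hp
    | succ j ih =>
      convert hleft _ ih using 2
      push_cast
      ring
  obtain ⟨k, rfl⟩ := hn
  have hfalse : u p = false := by simpa [window] using congrArg List.head? hp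
  have htrue : u (p - 2 * (k + 1 : ℕ) + 1) = true := by
    have := hall (k + 1)
    simp only [window, List.cons.injEq] at this
    exact this.2.1
  rw [← hper, show p - 2 * (k + 1 : ℕ) + 1 + (2 * k + 1 : ℕ) = p by push_cast; ring, hfalse]
    at htrue
  exact Bool.false_ne_true htrue

/-- All the words known not to occur in a periodic configuration whose walls survive forever. -/
def forbiddenWords : List (List Bool) :=
  [false, false, true, false, true, false] :: [false, true, false, true, false, true] ::
    excludedWords

/-! ### How walls and fronts move -/

/-- The position in the image `y` of the wall which was at `w`; it is junk unless one of the cells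
`w, …, w + 3` is a wall of `y`. -/
def wallNext (y : ℤ → Bool) (w : ℤ) : ℤ :=
  if IsWall y w then w
  else if IsWall y (w + 1) then w + 1
  else if IsWall y (w + 2) then w + 2
  else w + 3

/-- The position in the image `y` of the front which was at `e`; it is junk unless one of the cells
`e - 2`, `e` and `e + 2` is a front of `y`. -/
def frontNext (y : ℤ → Bool) (e : ℤ) : ℤ :=
  if IsFront y e then e else if IsFront y (e + 2) then e + 2 else e - 2

@[simp] theorem wallNext_view (u : ℤ → Bool) (p k : ℤ) :
    wallNext (view u p) k = wallNext u (p + k) - p := by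
  simp only [wallNext, isWall_view, Int.cast_id, ← add_assoc]
  split_ifs <;> ring

@[simp] theorem frontNext_view (u : ℤ → Bool) (p k : ℤ) :
    frontNext (view u p) k = frontNext u (p + k) - p := by
  simp only [frontNext, isFront_view, Int.cast_id, ← add_assoc]
  split_ifs <;> ring

section LocalRules

variable {u : ℤ → Bool} {e w : ℤ}

theorem Survives.isWall_wallNext {u y : ℤ → Bool} {w : ℤ} (h : Survives u y w) :
    IsWall y (wallNext y w) := by
  unfold wallNext
  split_ifs with h₀ h₁ h₂
  · exact h₀
  · exact h₁
  · exact h₂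
  · simp_all [Survives]

theorem wallNext_cases (hu : Avoids forbiddenWords u) (hw : IsWall u w) :
    wallNext (step u) w = w ∨
      wallNext (step u) w = w + 1 ∧ IsFront u (w - 1) ∨
      wallNext (step u) w = w + 2 ∧ IsFront u (w - 1) ∧ (IsFront u (w + 1) ∨ IsFront u (w + 3)) ∨
      wallNext (step u) w = w + 3 ∧ IsFront u (w + 2) ∧ ¬IsFront u (w + 4) := by
  have := (hu.view w).local_property (a := 6) (old := [(-1, false), (0, true)]) (new := [])
    (fun v y => IsWall v 0 → wallNext y 0 = 0 ∨ wallNext y 0 = 1 ∧ IsFront v (-1) ∨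
      wallNext y 0 = 2 ∧ IsFront v (-1) ∧ (IsFront v 1 ∨ IsFront v 3) ∨
      wallNext y 0 = 3 ∧ IsFront v 2 ∧ ¬IsFront v 4)
    (by simp [← sub_eq_add_neg, hw.1, hw.2.1]) (by simp) 8
    (by simp [IsWall, IsFront, wallNext, ofWord, window]) (by decide +kernel)
  simpa [hw, sub_eq_iff_eq_add', ← sub_eq_add_neg] using this

theorem isFront_frontNext (hu : Avoids forbiddenWords u) (he : IsFront u e) :
    IsFront (step u) (frontNext (step u) e) := by
  have := (hu.view e).local_property (a := 9) (old := [(-1, true), (0, false)]) (new := [])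
    (fun v y => IsFront v 0 → IsFront y 0 ∨ IsFront y 2 ∨ IsFront y (-2))
    (by simp [← sub_eq_add_neg, he.1, he.2.1]) (by simp) 9 (fun _ _ => id) (by decide +kernel)
  unfold frontNext
  simp only [step_view, isFront_view] at this
  split_ifs <;> simp_all [← sub_eq_add_neg]

theorem frontNext_lt_wallNext_of_adjacent (hu : Avoids forbiddenWords u) (he : IsFront u e)
    (hw : IsWall u (e + 1)) : frontNext (step u) e < wallNext (step u) (e + 1) := by
  have := (hu.view e).local_property (a := 7) (new := [])
    (old := [(-1, true), (0, false), (1, true)])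
    (fun v y => IsFront v 0 → IsWall v 1 → frontNext y 0 < wallNext y 1)
    (by simp [← sub_eq_add_neg, he.1, he.2.1, hw.2.1]) (by simp) 9
    (by simp [IsWall, IsFront, wallNext, frontNext, ofWord, window])
    (by decide +kernel)
  simpa [he, hw] using this

theorem wallNext_lt_frontNext_of_near (hu : Avoids forbiddenWords u) (hw : IsWall u w) {k : ℤ}
    (hk : k ∈ [(1 : ℤ), 2, 3]) (he : IsFront u (w + k)) :
    wallNext (step u) w < frontNext (step u) (w + k) := by
  have := (hu.view w).local_property (a := 6) (new := [])
    (old := [(-1, false), (0, true), (k - 1, true), (k, false)])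
    (fun v y => IsWall v 0 → IsFront v k → wallNext y 0 < frontNext y k)
    (by simp [← sub_eq_add_neg, ← add_sub_assoc, hw.1, hw.2.1, he.1, he.2.1]) (by simp) 9
    (by fin_cases hk <;> simp [IsWall, IsFront, wallNext, frontNext, ofWord, window])
    (by fin_cases hk <;> decide +kernel)
  simpa [hw, he] using this

theorem box_progress (hu : Avoids forbiddenWords u) (he : IsFront u e) (hbox : StartsBox u e) :
    frontNext (step u) e = e - 2 ∨
      frontNext (step u) e = e ∧ ¬StartsBox (step u) e ∨
      frontNext (step u) e = e + 2 ∧ ¬StartsBox (step u) (e + 2) := by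
  have := (hu.view e).local_property (a := 7) (new := [])
    (old := [(-1, true), (0, false), (1, true), (2, false), (3, false)])
    (fun v y => IsFront v 0 → frontNext y 0 = -2 ∨ frontNext y 0 = 0 ∧ ¬StartsBox y 0 ∨
      frontNext y 0 = 2 ∧ ¬StartsBox y 2)
    (by simp [← sub_eq_add_neg, hbox.1, hbox.2.1, hbox.2.2.1, hbox.2.2.2.1, hbox.2.2.2.2])
    (by simp) 9 (by simp [IsFront, StartsBox, frontNext, ofWord, window]) (by decide +kernel)
  simpa [he, sub_eq_iff_eq_add', ← sub_eq_add_neg] using this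

theorem front_progress (hu : Avoids forbiddenWords u) (he : IsFront u e) (hbox : ¬StartsBox u e) :
    frontNext (step u) e = e + 2 ∧ ¬StartsBox (step u) (e + 2) ∨ IsBlocked u e ∨
      IsWall u (e + 1) ∧ ¬IsWall (step u) (e + 1) := by
  have := (hu.view e).local_property (a := 7) (old := [(-1, true), (0, false)]) (new := [])
    (fun v y => IsFront v 0 → ¬StartsBox v 0 → frontNext y 0 = 2 ∧ ¬StartsBox y 2 ∨
      IsBlocked v 0 ∨ IsWall v 1 ∧ ¬IsWall y 1)
    (by simp [← sub_eq_add_neg, he.1, he.2.1]) (by simp) 9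
    (by simp [IsWall, IsFront, StartsBox, IsBlocked, frontNext, ofWord, window])
    (by decide +kernel)
  simpa [he, hbox, sub_eq_iff_eq_add', ← sub_eq_add_neg] using this

theorem isBlocked_step (hu : Avoids forbiddenWords u) (he : IsBlocked u e)
    (hw : IsWall (step u) (e + 1)) : IsBlocked (step u) e := by
  have := (hu.view e).local_property (a := 6) (new := [])
    (old := [(-2, false), (-1, true), (0, false), (1, true)])
    (fun v y => IsBlocked v 0 → IsWall y 1 → IsBlocked y 0)
    (by simp [← sub_eq_add_neg, he.1, he.2.1, he.2.2.1, he.2.2.2.1]) (by simp) 6 (fun _ _ => id)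
    (by decide +kernel)
  simpa [he, hw] using this

end LocalRules

/-! ### Counting walls -/

section Counting

open Finset

variable {R : Type*} [Ring R]

/-- The wall `v` of the image of `u` is traced back to the wall `v - d` of `u`, the nearest one on
its left. -/
def IsSource (u : R → Bool) (v : R) (d : ℕ) : Prop :=
  d ≤ 3 ∧ IsWall u (v - d) ∧ ∀ k < d, ¬IsWall u (v - k)

theorem exists_isSource (u : R → Bool) {v : R} (hv : IsWall (step u) v) :
    ∃ d, IsSource u v d := by
  have hnear := (show Avoids [] (view u v) by simp [Avoids]).local_property (a := 6) (old := [])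
    (new := [(-1, false), (0, true)])
    (fun v y => IsWall y 0 → ∃ d ∈ List.range 4, IsWall v (-d))
    (by simp) (by simp [← sub_eq_add_neg, hv.1, hv.2.1]) 5
    (by simp [IsWall, ofWord, window, List.range_succ]) (by decide +kernel)
  have hex : ∃ d : ℕ, d < 4 ∧ IsWall u (v - d) := by
    simpa [hv, ← sub_eq_add_neg] using hnear
  classical
  obtain ⟨hd, hwall⟩ := Nat.find_spec hex
  exact ⟨Nat.find hex, Nat.le_of_lt_succ hd, hwall,
    fun k hk hk' => Nat.find_min hex hk ⟨hk.trans hd, hk'⟩⟩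

theorem exists_isWall_of_isWall_step (u : R → Bool) {v : R} {j : ℕ} (hj : j ∈ [2, 3])
    (hv : IsWall (step u) v) (hv' : IsWall (step u) (v + j)) :
    ∃ k < j, IsWall u (v + j - k) := by
  have := (show Avoids [] (view u v) by simp [Avoids]).local_property (a := 5) (old := [])
    (new := [(-1, false), (0, true), (j - 1, false), (j, true)])
    (fun v y => IsWall y j → ∃ k ∈ List.range j, IsWall v (j - k)) (by simp)
    (by simp [← sub_eq_add_neg, ← add_sub_assoc, hv.1, hv.2.1, hv'.1, hv'.2.1]) 7
    (by fin_cases hj <;> simp [IsWall, ofWord, window, List.range_succ])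
    (by fin_cases hj <;> decide +kernel)
  simpa [hv', ← add_sub_assoc] using this

theorem IsSource.not_isWall_step {u : R → Bool} {v : R} {d j : ℕ} (hd : IsSource u v d)
    (hv : IsWall (step u) v) (hj : 0 < j) (hjd : j ≤ d) : ¬IsWall (step u) (v - j) := fun hv' => by
  have hj : j = 1 ∨ j ∈ [2, 3] := by
    have := hd.1
    simp only [List.mem_cons, List.not_mem_nil, or_false]
    omega
  rcases hj with rfl | hj
  · simpa [hv.1] using hv'.2.1
  · obtain ⟨k, hk, hwall⟩ := exists_isWall_of_isWall_step u hj hv' (by rwa [sub_add_cancel])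
    exact hd.2.2 k (hk.trans_le hjd) (by rwa [sub_add_cancel] at hwall)

theorem IsSource.le {u : R → Bool} {v v' : R} {d d' : ℕ} (hv : IsWall (step u) v)
    (hv' : IsWall (step u) v') (hd' : IsSource u v' d') (heq : v - d = v' - d') : d' ≤ d := by
  by_contra! hlt
  refine hd'.not_isWall_step hv' (Nat.sub_pos_of_lt hlt) (Nat.sub_le d' d) ?_
  rwa [Nat.cast_sub hlt.le, sub_sub_eq_add_sub, add_sub_right_comm, ← heq, sub_add_cancel]

theorem IsSource.survives {u y : R → Bool} {v : R} {d : ℕ} (hd : IsSource u v d)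
    (hv : IsWall y v) : Survives u y (v - d) := by
  obtain ⟨hle, -, hmin⟩ := hd
  have hmin₀ := hmin 0
  have hmin₁ := hmin 1
  unfold Survives
  interval_cases d
  · simp [hv]
  · simp [hv]
  · simp_all
  · have h₁ : v - 3 + 2 = v - 1 := by rw [sub_add]; norm_num
    simp_all

theorem survives_of_card_le [Fintype R] {u : R → Bool}
    (hcard : #{w | IsWall u w} ≤ #{v | IsWall (step u) v}) {w : R}
    (hw : IsWall u w) : Survives u (step u) w := by
  choose! d hd using fun v => exists_isSource u (v := v)
  have hsurj : Set.SurjOn (fun v => v - d v) ({v | IsWall (step u) v} : Finset R)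
      ({w | IsWall u w} : Finset R) := by
    refine Finset.surjOn_of_injOn_of_card_le _ (fun v hv => ?_) (fun v hv v' hv' heq => ?_) hcard
    · simpa using (hd v (by simpa using hv)).2.1
    · have hv : IsWall (step u) v := by simpa using hv
      have hv' : IsWall (step u) v' := by simpa using hv'
      have hdeq : d v = d v' := ((hd v hv).le hv' hv heq.symm).antisymm
        ((hd v' hv').le hv hv' heq)
      simpa [hdeq] using heq
  obtain ⟨v, hv, rfl⟩ := hsurj (by simpa using hw)
  have hv : IsWall (step u) v := by simpa using hv
  exact (hd v hv).survives hv

theorem card_isFront [Fintype R] (u : R → Bool) :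
    #{e | IsFront u e} = #{w | IsWall u w} := by
  have hcell (v : ℤ → Bool) :
      (if IsFront v 1 then 1 else 0) + (if StartsBox v (-1) then 1 else 0) +
        (if v 1 then 1 else 0) =
      (if IsWall v 1 then 1 else 0) + (if StartsBox v 0 then 1 else 0) +
        if v 0 then 1 else 0 := by
    rcases (v (-2)).eq_false_or_eq_true with h₀ | h₀ <;>
      rcases (v (-1)).eq_false_or_eq_true with h₁ | h₁ <;>
      rcases (v 0).eq_false_or_eq_true with h₂ | h₂ <;>
      rcases (v 1).eq_false_or_eq_true with h₃ | h₃ <;>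
      rcases (v 2).eq_false_or_eq_true with h₄ | h₄ <;>
      rcases (v 3).eq_false_or_eq_true with h₅ | h₅ <;>
      simp [IsFront, IsWall, StartsBox, *]
  have hsum := Fintype.sum_congr _ _ fun i => hcell (view u i)
  have shift (f : R → ℕ) (c : R) : ∑ i, f (i + c) = ∑ i, f i :=
    Equiv.sum_comp (Equiv.addRight c) f
  simp only [isFront_view, isWall_view, startsBox_view, view_apply, Int.cast_one, Int.cast_neg,
    Int.cast_zero, add_zero, sum_add_distrib] at hsum
  rw [shift (fun i => if IsFront u i then 1 else 0), shift (fun i => if u i then 1 else 0),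
    shift (fun i => if StartsBox u i then 1 else 0),
    shift (fun i => if IsWall u i then 1 else 0)] at hsum
  simpa only [Finset.card_filter, add_left_inj] using hsum

theorem isSwitch_iff {n : ℕ} (x : ZMod n → Bool) (i : ZMod n) :
    IsSwitch x i ↔ IsWall x (i + 1) ∨ IsFront x (i + 1) := by
  have hinBox (j : ZMod n) : InBox x j ↔ StartsBox x j ∨ StartsBox x (j - 1) := by
    refine ⟨?_, ?_⟩
    · rintro ⟨k, hk, rfl | rfl⟩
      · exact .inl hk
      · exact .inr (by rwa [add_sub_cancel_right])
    · rintro (h | h)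
      · exact ⟨j, h, .inl rfl⟩
      · exact ⟨j - 1, h, .inr (sub_add_cancel j 1).symm⟩
  have hcell (v : ℤ → Bool) : StartsBox v 1 ∨ v 0 ≠ v 1 ∧ ¬(StartsBox v 0 ∨ StartsBox v (-1)) ∧
      ¬(StartsBox v 1 ∨ StartsBox v 0) ↔ IsWall v 1 ∨ IsFront v 1 := by
    simp only [IsFront, IsWall, StartsBox, Int.reduceAdd, Int.reduceSub, Int.reduceNeg]
    cases v (-2) <;> cases v (-1) <;> cases v 0 <;> cases v 1 <;> cases v 2 <;> simp
  rw [IsSwitch, hinBox, hinBox, add_sub_cancel_right]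
  change StartsBox x (i + 1) ∨ _ ↔ _
  simpa [← sub_eq_add_neg] using hcell (view x i)

theorem switchCount_eq {n : ℕ} [NeZero n] (x : ZMod n → Bool) :
    switchCount x = 2 * #{w | IsWall x w} := by
  have hdisj : Disjoint ({w | IsWall x w} : Finset (ZMod n))
      ({e | IsFront x e} : Finset (ZMod n)) := by
    refine Finset.disjoint_filter.2 fun i _ hw he => ?_
    simpa [hw.2.1] using he.2.1
  calc switchCount x = Nat.card {i // IsWall x i ∨ IsFront x i} :=
        Nat.card_congr ((Equiv.addRight 1).subtypeEquiv (isSwitch_iff x))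
    _ = #(({w | IsWall x w} : Finset (ZMod n)) ∪ ({e | IsFront x e} : Finset (ZMod n))) := by
        rw [Nat.card_eq_fintype_card, Fintype.card_subtype, Finset.filter_or]
    _ = 2 * #{w | IsWall x w} := by
        rw [Finset.card_union_of_disjoint hdisj, card_isFront, two_mul]

end Counting

/-! ### Walls and fronts alternate -/

theorem exists_last_before {P : ℤ → Prop} {a b : ℤ} (hab : a < b) (ha : P a) :
    ∃ p, a ≤ p ∧ p < b ∧ P p ∧ ∀ r, p < r → r < b → ¬P r := by
  obtain ⟨p, ⟨hp, hpb⟩, hmax⟩ := Int.exists_greatest_of_bdd (P := fun p => P p ∧ p < b)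
    ⟨b, fun _ h => h.2.le⟩ ⟨a, ha, hab⟩
  exact ⟨p, hmax a ⟨ha, hab⟩, hpb, hp, fun r hpr hrb hr => hpr.not_ge (hmax r ⟨hr, hrb⟩)⟩

section Alternation

variable {u : ℤ → Bool} {a b e w : ℤ}

theorem IsWall.ne_of_isFront (hw : IsWall u w) (he : IsFront u e) : w ≠ e := by
  rintro rfl
  simpa [hw.2.1] using he.2.1

theorem IsFront.not_isFront_add_one (he : IsFront u e) : ¬IsFront u (e + 1) := fun he' => by
  simpa [he.2.1] using he'.1

theorem exists_isWall_between_isFront (ha : IsFront u a) (hb : IsFront u b) (hab : a < b) :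
    ∃ w, IsWall u w ∧ a < w ∧ w < b := by
  obtain ⟨p, hap, hpb, hp, hlast⟩ :=
    exists_last_before (P := fun p => u p = false) hab ha.2.1
  have hne : p + 1 ≠ b := by
    rintro rfl
    simpa [hp] using hb.1
  have hp₁ : u (p + 1) = true := by simpa using hlast (p + 1) (by omega) (by omega)
  refine ⟨p + 1, ⟨by simpa using hp, hp₁, fun ⟨hl, hr, hr'⟩ => ?_⟩, by omega, by omega⟩
  obtain rfl : b = p + 2 := by
    by_contra h
    exact hlast (p + 2) (by omega) (by omega) (by simpa [add_assoc] using hr)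
  refine hb.2.2 ⟨?_, by simpa using hp, ?_⟩
  · rwa [show p + 2 - 3 = p + 1 - 2 by ring]
  · rwa [show p + 2 + 1 = p + 1 + 2 by ring]

theorem exists_isFront_between_isWall (ha : IsWall u a) (hb : IsWall u b) (hab : a < b) :
    ∃ e, IsFront u e ∧ a < e ∧ e < b := by
  obtain ⟨p, hap, hpb, hp, hlast⟩ := exists_last_before (P := fun p => u p = true) hab ha.2.1
  have hne : p + 1 ≠ b := by
    rintro rfl
    simpa [hp] using hb.1
  have hp₁ : u (p + 1) = false := by simpa using hlast (p + 1) (by omega) (by omega)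
  by_cases hfront : IsFront u (p + 1)
  · exact ⟨p + 1, hfront, by omega, by omega⟩
  obtain ⟨h₂, h₁, hr⟩ : u (p - 2) = true ∧ u (p - 1) = false ∧ u (p + 2) = false := by
    simpa [IsFront, hp, hp₁, add_sub_assoc, add_assoc, ← sub_eq_add_neg] using hfront
  have hpa : p ≠ a := by
    rintro rfl
    exact ha.2.2 ⟨h₂, hp₁, hr⟩
  have hpa' : p - 1 ≠ a := by
    rintro rfl
    simpa [h₁] using ha.2.1
  refine ⟨p - 1, ⟨by rwa [show p - 1 - 1 = p - 2 by ring], h₁, fun h => ?_⟩, by omega, by omega⟩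
  simpa [hp] using h.2.2

theorem IsBlocked.isFront (he : IsBlocked u e) : IsFront u e :=
  ⟨he.2.1, he.2.2.1, fun h => by simpa [he.2.2.2.1] using h.2.2⟩

theorem IsBlocked.isWall_add_one (he : IsBlocked u e) : IsWall u (e + 1) :=
  ⟨by simpa using he.2.2.1, he.2.2.2.1, fun h => he.2.2.2.2 (by simpa [add_assoc] using h.2)⟩

theorem IsBlocked.isWall_sub_one (he : IsBlocked u e) : IsWall u (e - 1) := by
  refine ⟨by rw [show e - 1 - 1 = e - 2 by ring]; exact he.1, he.2.1, fun h => ?_⟩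
  have := h.2.2
  rw [show e - 1 + 2 = e + 1 by ring, he.2.2.2.1] at this
  exact Bool.noConfusion this

theorem IsBlocked.not_isBlocked_sub_two (hu : Avoids forbiddenWords u) (he : IsBlocked u e) :
    ¬IsBlocked u (e - 2) := fun he' => by
  refine hu [false, true, false, true, false, true] (by simp [forbiddenWords]) (e - 4) ?_
  have h₄ := he'.1
  have h₃ := he'.2.1
  obtain ⟨h₂, h₁, h₀, hr, -⟩ := he
  simp only [show e - 2 - 2 = e - 4 by ring, show e - 2 - 1 = e - 3 by ring] at h₄ h₃
  simp [window, sub_add, *]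

end Alternation

/-! ### Configurations of odd period whose walls survive -/

/-- The configuration `u` has the odd period `n`, and none of its walls ever disappears. -/
structure WallPreserving (n : ℕ) (u : ℤ → Bool) : Prop where
  odd : Odd n
  periodic : Function.Periodic u n
  survives : ∀ t w, IsWall (step^[t] u) w → Survives (step^[t] u) (step^[t + 1] u) w

/-- The front `e` faces the wall `w`, the first one on its right. -/
structure Faces (u : ℤ → Bool) (e w : ℤ) : Prop where
  isFront : IsFront u e
  isWall : IsWall u w
  lt : e < w
  le_of_isWall : ∀ v, IsWall u v → e < v → w ≤ v

/-- The wall `w` never moves. -/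
def IsStaticWall (u : ℤ → Bool) (w : ℤ) : Prop := ∀ t, IsWall (step^[t] u) w

theorem frontNext_cases (y : ℤ → Bool) (e : ℤ) :
    frontNext y e = e - 2 ∨ frontNext y e = e ∨ frontNext y e = e + 2 := by
  unfold frontNext
  split_ifs <;> simp

theorem IsSource.wallNext_eq {u : ℤ → Bool} {v : ℤ} {d : ℕ} (hd : IsSource u v d)
    (hv : IsWall (step u) v) : wallNext (step u) (v - d) = v := by
  have hlt (j : ℕ) (hj : 0 < j) (hjd : j ≤ d) : ¬IsWall (step u) (v - d + (d - j : ℕ)) := by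
    simpa [Nat.cast_sub hjd] using hd.not_isWall_step hv hj hjd
  have hle := hd.1
  unfold wallNext
  interval_cases d
  · simp [hv]
  · have := hlt 1
    simp_all
  · have := hlt 1
    have := hlt 2
    simp_all
  · have := hlt 1
    have := hlt 2
    have := hlt 3
    simp_all

theorem exists_wallNext_eq {u : ℤ → Bool} {v : ℤ} (hv : IsWall (step u) v) :
    ∃ w, IsWall u w ∧ wallNext (step u) w = v :=
  let ⟨d, hd⟩ := exists_isSource u hv
  ⟨v - d, hd.2.1, hd.wallNext_eq hv⟩

theorem Faces.le_of_isFront {u : ℤ → Bool} {e f w : ℤ} (h : Faces u e w) (hf : IsFront u f)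
    (hfw : f < w) : f ≤ e := by
  by_contra! hef
  obtain ⟨v, hv, hev, hvf⟩ := exists_isWall_between_isFront h.isFront hf hef
  exact (h.le_of_isWall v hv hev).not_gt (hvf.trans hfw)

theorem exists_faces {u : ℤ → Bool} {e w : ℤ} (he : IsFront u e) (hw : IsWall u w) (h : e < w) :
    ∃ e', Faces u e' w := by
  obtain ⟨e', -, hew, he', hlast⟩ := exists_last_before (P := IsFront u) h he
  refine ⟨e', he', hw, hew, fun v hv hev => ?_⟩
  by_contra! hvw
  obtain ⟨f, hf, hvf, hfw⟩ := exists_isFront_between_isWall hv hw hvw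
  exact hlast f (hev.trans hvf) hfw hf

namespace WallPreserving

variable {n : ℕ} {u : ℤ → Bool} {e w : ℤ}

theorem view_period (hu : WallPreserving n u) : view u n = u :=
  funext fun k => by simpa [add_comm] using hu.periodic k

theorem isWall_sub_period (hu : WallPreserving n u) : IsWall u (w - n) ↔ IsWall u w := by
  simpa [hu.view_period] using isWall_view u n (w - n)

theorem isFront_sub_period (hu : WallPreserving n u) : IsFront u (e - n) ↔ IsFront u e := by
  simpa [hu.view_period] using isFront_view u n (e - n)

protected theorem step (hu : WallPreserving n u) : WallPreserving n (step u) where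
  odd := hu.odd
  periodic p := by
    have := congrFun (step_view u n) p
    rw [hu.view_period] at this
    simpa [add_comm] using this.symm
  survives t w := hu.survives (t + 1) w

theorem iterate (hu : WallPreserving n u) (t : ℕ) : WallPreserving n (step^[t] u) := by
  induction t with
  | zero => exact hu
  | succ t ih => simpa only [Function.iterate_succ_apply'] using ih.step

theorem avoids (hu : WallPreserving n u) : Avoids forbiddenWords u := by
  have hu₀ := avoids_excludedWords (hu.survives 0)
  have hu₁ := avoids_excludedWords (hu.step.survives 0)
  rw [Avoids, forbiddenWords, List.forall_mem_cons, List.forall_mem_cons]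
  exact ⟨window_ne_001010 hu₀ hu₁, window_ne_010101 hu₀ hu.odd hu.periodic, hu₀⟩

theorem isWall_wallNext (hu : WallPreserving n u) (hw : IsWall u w) :
    IsWall (step u) (wallNext (step u) w) :=
  (hu.survives 0 w hw).isWall_wallNext

theorem frontNext_lt_wallNext (hu : WallPreserving n u) (he : IsFront u e) (hw : IsWall u w)
    (hlt : e < w) : frontNext (step u) e < wallNext (step u) w := by
  have hne := (hu.isWall_wallNext hw).ne_of_isFront (isFront_frontNext hu.avoids he)
  rcases (show e + 1 ≤ w from hlt).eq_or_lt with rfl | hlt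
  · exact frontNext_lt_wallNext_of_adjacent hu.avoids he hw
  · have := frontNext_cases (step u) e
    have := wallNext_cases hu.avoids hw
    omega

theorem wallNext_lt_frontNext (hu : WallPreserving n u) (hw : IsWall u w) (he : IsFront u e)
    (hlt : w < e) : wallNext (step u) w < frontNext (step u) e := by
  have hne := (hu.isWall_wallNext hw).ne_of_isFront (isFront_frontNext hu.avoids he)
  obtain ⟨k, rfl⟩ : ∃ k, e = w + k := ⟨e - w, by omega⟩
  by_cases hk : k ∈ [(1 : ℤ), 2, 3]
  · exact wallNext_lt_frontNext_of_near hu.avoids hw hk he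
  have hk : 4 ≤ k := by
    simp only [List.mem_cons, List.not_mem_nil, or_false] at hk
    omega
  have := frontNext_cases (step u) (w + k)
  rcases hk.eq_or_lt with rfl | hk
  · have : wallNext (step u) w ≤ w + 2 := by
      rcases wallNext_cases hu.avoids hw with h | h | h | h
      · omega
      · omega
      · omega
      · exact absurd he h.2.2
    omega
  · have := wallNext_cases hu.avoids hw
    omega

theorem wallNext_le_wallNext (hu : WallPreserving n u) {w' : ℤ} (hw : IsWall u w)
    (hw' : IsWall u w') (hle : w ≤ w') : wallNext (step u) w ≤ wallNext (step u) w' := by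
  rcases hle.eq_or_lt with rfl | hlt
  · rfl
  · obtain ⟨e, he, hwe, hew'⟩ := exists_isFront_between_isWall hw hw' hlt
    exact ((hu.wallNext_lt_frontNext hw he hwe).trans (hu.frontNext_lt_wallNext he hw' hew')).le

protected theorem faces (hu : WallPreserving n u) (h : Faces u e w) :
    Faces (step u) (frontNext (step u) e) (wallNext (step u) w) where
  isFront := isFront_frontNext hu.avoids h.isFront
  isWall := hu.isWall_wallNext h.isWall
  lt := hu.frontNext_lt_wallNext h.isFront h.isWall h.lt
  le_of_isWall v hv hlt := by
    obtain ⟨v, hvu, rfl⟩ := exists_wallNext_eq hv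
    refine hu.wallNext_le_wallNext h.isWall hvu (h.le_of_isWall v hvu ?_)
    by_contra! hve
    have hve := hve.lt_of_ne (hvu.ne_of_isFront h.isFront)
    exact hlt.not_gt (hu.wallNext_lt_frontNext hvu h.isFront hve)

theorem sub_lt_period (hu : WallPreserving n u) (h : Faces u e w) : w - e < n := by
  by_contra! hle
  have hwall := hu.isWall_sub_period.2 h.isWall
  have hne := hwall.ne_of_isFront h.isFront
  have := h.le_of_isWall _ hwall (by omega)
  have := hu.odd.pos
  omega

end WallPreserving

/-! ### No wall stays in place forever -/

/-- Measures how far the front `e` is from being blocked by a static wall `w` which it faces. A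
front that starts a box may first move back, but each such step decreases the first branch, which
exceeds all values of the second one since `w - e < n`. -/
def potential (n : ℕ) (u : ℤ → Bool) (e w : ℤ) : ℤ :=
  if StartsBox u e then 3 * n + (e - w) else w - e

section Static

variable {n : ℕ} {u : ℤ → Bool} {e w : ℤ}

theorem IsStaticWall.wallNext_eq (hw : IsStaticWall u w) : wallNext (step u) w = w :=
  if_pos (hw 1)

theorem IsStaticWall.iterate (hw : IsStaticWall u w) (t : ℕ) : IsStaticWall (step^[t] u) w :=
  fun s => by simpa only [← Function.iterate_add_apply] using hw (s + t)

namespace WallPreserving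

theorem faces_of_isStaticWall (hu : WallPreserving n u) (h : Faces u e w)
    (hw : IsStaticWall u w) : Faces (step u) (frontNext (step u) e) w := by
  simpa only [hw.wallNext_eq] using hu.faces h

theorem potential_pos (hu : WallPreserving n u) (h : Faces u e w) : 0 < potential n u e w := by
  have := hu.sub_lt_period h
  have := h.lt
  unfold potential
  split_ifs <;> omega

theorem potential_step_lt (hu : WallPreserving n u) (h : Faces u e w) (hw : IsStaticWall u w)
    (hblocked : ¬IsBlocked u e) :
    potential n (step u) (frontNext (step u) e) w < potential n u e w := by
  have hfaces := hu.faces_of_isStaticWall h hw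
  have hdist := hu.sub_lt_period h
  have hdist' := hu.step.sub_lt_period hfaces
  have hlt' := hfaces.lt
  unfold potential
  by_cases hbox : StartsBox u e
  · rw [if_pos hbox]
    rcases box_progress hu.avoids h.isFront hbox with hback | ⟨hstay, hbox'⟩ | ⟨hfwd, hbox'⟩
    · split_ifs <;> omega
    · rw [hstay, if_neg hbox']
      omega
    · rw [hfwd, if_neg hbox']
      omega
  · rw [if_neg hbox]
    rcases front_progress hu.avoids h.isFront hbox with ⟨hfwd, hbox'⟩ | hb | ⟨hwall, hgone⟩
    · rw [hfwd, if_neg hbox']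
      omega
    · exact absurd hb hblocked
    · obtain rfl := (h.le_of_isWall _ hwall (by omega)).antisymm h.lt
      exact absurd (hw 1) hgone

theorem exists_isBlocked_of_faces (hu : WallPreserving n u) (h : Faces u e w)
    (hw : IsStaticWall u w) : ∃ t, IsBlocked (step^[t] u) (w - 1) := by
  induction hN : (potential n u e w).toNat using Nat.strong_induction_on generalizing u e with
  | _ N ih =>
    by_cases hb : IsBlocked u e
    · have hwe : w = e + 1 :=
        (h.le_of_isWall _ hb.isWall_add_one (by omega)).antisymm h.lt
      exact ⟨0, by simpa [hwe] using hb⟩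
    · have hlt := hu.potential_step_lt h hw hb
      have hpos := hu.potential_pos h
      obtain ⟨t, ht⟩ := ih _ (by omega) hu.step (hu.faces_of_isStaticWall h hw)
        (hw.iterate 1) rfl
      exact ⟨t + 1, ht⟩

theorem exists_isBlocked (hu : WallPreserving n u) (hw : IsStaticWall u w) :
    ∃ t, IsBlocked (step^[t] u) (w - 1) := by
  obtain ⟨f, hf, -, hfw⟩ := exists_isFront_between_isWall (hu.isWall_sub_period.2 (hw 0)) (hw 0)
    (by simpa using hu.odd.pos)
  obtain ⟨e, he⟩ := exists_faces hf (hw 0) hfw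
  exact hu.exists_isBlocked_of_faces he hw

theorem exists_not_isBlocked (hu : WallPreserving n u) (e : ℤ) :
    ∃ t, ¬IsBlocked (step^[t] u) e := by
  by_contra! hb
  obtain ⟨t, ht⟩ := hu.exists_isBlocked fun t => (hb t).isWall_sub_one
  rw [show e - 1 - 1 = e - 2 by ring] at ht
  exact (hb t).not_isBlocked_sub_two (hu.iterate t).avoids ht

theorem not_isStaticWall (hu : WallPreserving n u) : ¬IsStaticWall u w := fun hw => by
  obtain ⟨s, hs⟩ := hu.exists_isBlocked hw
  obtain ⟨t, ht⟩ := (hu.iterate s).exists_not_isBlocked (w - 1)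
  refine ht ?_
  clear ht
  induction t with
  | zero => exact hs
  | succ t ih =>
    rw [Function.iterate_succ_apply']
    refine isBlocked_step ((hu.iterate s).iterate t).avoids ih ?_
    simpa only [sub_add_cancel, Function.iterate_succ_apply'] using hw.iterate s (t + 1)

end WallPreserving

end Static

/-! ### Consecutive fronts at odd distance -/

/-- `a` and `b` are consecutive fronts at odd distance, and `w` is the only wall between them. -/
structure OddGap (u : ℤ → Bool) (a w b : ℤ) : Prop extends Faces u a w where
  isFront_right : IsFront u b
  lt_right : w < b
  le_of_isWall_right : ∀ v, IsWall u v → v < b → v ≤ w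
  odd : Odd (b - a)

section OddGap

variable {n : ℕ} {u : ℤ → Bool} {a b e w : ℤ}

theorem OddGap.le_of_isFront_right (h : OddGap u a w b) (he : IsFront u e) (hwe : w < e) :
    b ≤ e := by
  by_contra! heb
  obtain ⟨v, hv, hev, hvb⟩ := exists_isWall_between_isFront he h.isFront_right heb
  exact (h.le_of_isWall_right v hv hvb).not_gt (hwe.trans hev)

/-- Fronts move by even distances, whereas a wall in motion advances by 1 or 3 cells, an advance
by 2 being incompatible with the parity of `b - a`. -/
theorem OddGap.wallNext_eq_or (hu : Avoids forbiddenWords u) (h : OddGap u a w b) :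
    wallNext (step u) w = w ∨
      Even (b - w) ∧ Odd (frontNext (step u) b - wallNext (step u) w) := by
  have hodd := h.odd
  have hlt := h.lt
  have hlt_right := h.lt_right
  have hleft (hf : IsFront u (w - 1)) : a = w - 1 := by
    have := h.le_of_isFront hf (by omega)
    omega
  have hnext := frontNext_cases (step u) b
  rw [Int.even_iff, Int.odd_iff] at *
  rcases wallNext_cases hu h.isWall with hstay | ⟨hmove, hf⟩ | ⟨-, hf, hf' | hf'⟩ | ⟨hmove, hf, -⟩
  · exact .inl hstay
  · have := hleft hf
    omega
  · have := hleft hf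
    have := h.le_of_isFront_right hf' (by omega)
    omega
  · have := hleft hf
    have := h.le_of_isFront_right hf' (by omega)
    have : b ≠ w + 2 := by
      rintro rfl
      exact h.isFront_right.not_isFront_add_one (by rwa [add_assoc])
    omega
  · have := h.le_of_isFront_right hf (by omega)
    have : b ≠ w + 1 := by
      rintro rfl
      exact h.isFront_right.not_isFront_add_one (by rwa [add_assoc])
    omega

theorem isStaticWall_of_invariant {S : (ℤ → Bool) → Prop}
    (hS : ∀ u, S u → IsWall u w ∧ S (step u)) (hu : S u) : IsStaticWall u w := fun t => by
  induction t generalizing u with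
  | zero => exact (hS u hu).1
  | succ t ih => exact ih (hS u hu).2

namespace WallPreserving

theorem oddGap (hu : WallPreserving n u) (h : OddGap u a w b) :
    OddGap (step u) (frontNext (step u) a) (wallNext (step u) w)
      (frontNext (step u) b) where
  toFaces := hu.faces h.toFaces
  isFront_right := isFront_frontNext hu.avoids h.isFront_right
  lt_right := hu.wallNext_lt_frontNext h.isWall h.isFront_right h.lt_right
  le_of_isWall_right v hv hlt := by
    obtain ⟨v, hvu, rfl⟩ := exists_wallNext_eq hv
    refine hu.wallNext_le_wallNext hvu h.isWall (h.le_of_isWall_right v hvu ?_)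
    by_contra! hbv
    have hbv := hbv.lt_of_ne (hvu.ne_of_isFront h.isFront_right).symm
    exact hlt.not_gt (hu.frontNext_lt_wallNext h.isFront_right hvu hbv)
  odd := by
    have := frontNext_cases (step u) a
    have := frontNext_cases (step u) b
    have := h.odd
    rw [Int.odd_iff] at *
    omega

theorem even_of_oddGap (hu : WallPreserving n u) (h : OddGap u a w b) : Even (b - w) := by
  by_contra hodd
  refine hu.not_isStaticWall (w := w) (isStaticWall_of_invariant
    (S := fun u => WallPreserving n u ∧ ∃ a b, OddGap u a w b ∧ ¬Even (b - w)) ?_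
    ⟨hu, a, b, h, hodd⟩)
  rintro u ⟨hu, a, b, h, hodd⟩
  have hstay := (h.wallNext_eq_or hu.avoids).resolve_right fun hmove => hodd hmove.1
  refine ⟨h.isWall, hu.step, _, _, hstay ▸ hu.oddGap h, ?_⟩
  have := frontNext_cases (step u) b
  rw [Int.even_iff] at *
  omega

theorem not_oddGap (hu : WallPreserving n u) : ¬OddGap u a w b := fun h => by
  refine hu.not_isStaticWall (w := w) (isStaticWall_of_invariant
    (S := fun u => WallPreserving n u ∧ ∃ a b, OddGap u a w b) ?_ ⟨hu, a, b, h⟩)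
  rintro u ⟨hu, a, b, h⟩
  have hstay := (h.wallNext_eq_or hu.avoids).resolve_right fun hmove =>
    Int.not_even_iff_odd.2 hmove.2 (hu.step.even_of_oddGap (hu.oddGap h))
  exact ⟨h.isWall, hu.step, _, _, hstay ▸ hu.oddGap h⟩

end WallPreserving

theorem exists_oddGap {k : ℕ} (hk : Odd k) (ha : IsFront u a) (hb : IsFront u (a + k)) :
    ∃ a w b, OddGap u a w b := by
  have hex : ∃ k : ℕ, Odd k ∧ ∃ a, IsFront u a ∧ IsFront u (a + k) := ⟨k, hk, a, ha, hb⟩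
  classical
  obtain ⟨hk, a, ha, hb⟩ := Nat.find_spec hex
  have hmin {m : ℕ} := Nat.find_min hex (m := m)
  generalize Nat.find hex = k at *
  have hconsecutive (f : ℤ) (hf : IsFront u f) (haf : a < f) (hfb : f < a + k) : False := by
    obtain ⟨m, rfl⟩ : ∃ m : ℕ, f = a + m := ⟨(f - a).toNat, by omega⟩
    have hmk : m < k := by omega
    rcases m.even_or_odd with hm | hm
    · refine hmin (m := k - m) (by omega) ⟨Nat.Odd.sub_even hmk.le hk hm, a + m, hf, ?_⟩
      rwa [Nat.cast_sub hmk.le, add_add_sub_cancel]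
    · exact hmin hmk ⟨hm, a, ha, hf⟩
  obtain ⟨w, hw, haw, hwb⟩ :=
    exists_isWall_between_isFront ha hb (by have := hk.pos; omega)
  refine ⟨a, w, a + k, ⟨ha, hw, haw, fun v hv hav => ?_⟩, hb, hwb, fun v hv hvb => ?_, by simpa⟩
  · by_contra! hvw
    obtain ⟨f, hf, hvf, hfw⟩ := exists_isFront_between_isWall hv hw hvw
    exact hconsecutive f hf (hav.trans hvf) (hfw.trans hwb)
  · by_contra! hwv
    obtain ⟨f, hf, hwf, hfv⟩ := exists_isFront_between_isWall hw hv hwv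
    exact hconsecutive f hf (haw.trans hwf) (hfv.trans hvb)

theorem WallPreserving.not_isFront (hu : WallPreserving n u) : ¬IsFront u e := fun he => by
  obtain ⟨a, w, b, h⟩ := exists_oddGap hu.odd (hu.isFront_sub_period.2 he)
    (by rwa [sub_add_cancel])
  exact hu.not_oddGap h

end OddGap

/-! ### Configurations in `X_s` are constant -/

theorem eq_of_monotone_of_periodic {α : Type*} [PartialOrder α] {f : ℤ → α} (hf : Monotone f)
    {c : ℤ} (hc : 0 < c) (hper : Function.Periodic f c) (p q : ℤ) : f p = f q := by
  have hle (p q : ℤ) : f p ≤ f q := by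
    rw [← hper.nat_mul (p - q).toNat q]
    exact hf (by nlinarith [Int.self_le_toNat (p - q)])
  exact (hle p q).antisymm (hle q p)

theorem monotone_of_not_isFront {u : ℤ → Bool} (hu : ∀ e, ¬IsFront u e) : Monotone u := by
  refine monotone_int_of_le_succ fun p => Bool.le_iff_imp.2 fun hp => ?_
  have hright := hu (p + 1)
  have hleft := hu (p - 1)
  by_contra hp₁
  simp_all [IsFront, add_assoc, add_sub_assoc, sub_sub, ← sub_eq_add_neg]

theorem wallPreserving_of_inXs {n : ℕ} (hn : Odd n) {x : ZMod n → Bool} (hx : InXs x) :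
    WallPreserving n (view x 0) where
  odd := hn
  periodic p := by simp
  survives t w hw := by
    have : NeZero n := ⟨hn.pos.ne'⟩
    have hstep : (bfoGlobal : (ZMod n → Bool) → ZMod n → Bool) = step := rfl
    simp only [InXs, hstep, switchCount_eq] at hx
    rw [step_iterate_view, isWall_view] at hw
    rw [step_iterate_view, step_iterate_view, survives_view, Function.iterate_succ_apply']
    refine survives_of_card_le (le_of_eq ?_) hw
    have h₀ := hx t
    have h₁ := hx (t + 1)
    rw [Function.iterate_succ_apply'] at h₁
    omega

end BFO

theorem Xs_no_box_domains_general {n : ℕ} (hn : Odd n) {x : ZMod n → Bool} (hx : InXs x)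
    (i j : ZMod n) : x i = x j := by
  have hu := BFO.wallPreserving_of_inXs hn hx
  have hmono := BFO.monotone_of_not_isFront fun _ => hu.not_isFront
  obtain ⟨p, rfl⟩ := ZMod.intCast_surjective i
  obtain ⟨q, rfl⟩ := ZMod.intCast_surjective j
  simpa using BFO.eq_of_monotone_of_periodic hmono (by exact_mod_cast hn.pos) hu.periodic p q

/-- A configuration in `X_s` contains none of the blocks
`0110100`, `1110100`, `111010100`, `1110111`, `1110110100`. -/
theorem Xs_no_box_domains (n : ℕ) (hn : Odd n) (x : ZMod n → Bool)
    (hx : InXs x) (i : ZMod n) :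
    ¬ ContainsAt x i [false, true, true, false, true, false, false] ∧
    ¬ ContainsAt x i [true, true, true, false, true, false, false] ∧
    ¬ ContainsAt x i [true, true, true, false, true, false, true, false, false] ∧
    ¬ ContainsAt x i [true, true, true, false, true, true, true] ∧
    ¬ ContainsAt x i
        [true, true, true, false, true, true, false, true, false, false] := by
  have hconst := Xs_no_box_domains_general hn hx
  refine ⟨?_, ?_, ?_, ?_, ?_⟩ <;>
  · intro h
    have htrue := h ⟨2, by simp⟩
    have hfalse := h ⟨3, by simp⟩
    rw [hconst _ i] at htrue hfalse
    exact Bool.noConfusion (htrue.symm.trans hfalse)
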